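/- Let γ_N, γ be curves of time length 1 such that d_∞(γ_N, γ) → 0 as N → ∞. Suppose that for any δ > 0 and any s, t ∈ [0, 1] which are δ-connected in γ, there exists N₀ such that s, t are 4δ-connected in γ_N for all N > N₀. Then for every δ > 0 there exists N₀ such that for all N > N₀, Ext γ_N ⊆ (Ext γ)^δ (curves identified with their ranges). (Lemma lem:deltaconv of the paper.) -/

import Mathlib

/-!
The proof uses Eilenberg's criterion. For a compact set `A`, a point `z` in the unbounded component
of the complement admits a continuous logarithm of `w - z` on `A` (`hasLog_of_unbounded`), while a
point outside `extSet A` admits none on the frontier of `extSet A` (`not_hasLog_frontier`). The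
second fact needs only that nowhere vanishing functions on the plane have logarithms.

Let `K`, a compact subset of `γ`, be the frontier of the exterior of `γ`. If `z` is in the exterior
of `γ_N` but at distance at least `δ` from that of `γ`, then `w - z` has a logarithm on `γ_N`, and
every point of `K` is at distance at least `δ` from `z`. It remains to transport the logarithm from
`γ_N` to `K` (`hasLog_transfer`), which contradicts `not_hasLog_frontier`.

Curves are locally connected (`Curve.exists_ball_subset_component`), so `K` is covered by finitely
many relatively open pieces of `γ`, each connected to its sample point `γ(s)` inside `γ` within a
small radius `η = δ / 20`. The values of the logarithm at the corresponding points `γ_N(s)`,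
continued along principal branches, define it on each piece. They are consistent where pieces
overlap because the two sample times are then `4 η`-connected in `γ`, hence `16 η`-connected in
`γ_N` for large `N`. Only finitely many pairs of times occur, and neither the pairs nor the
threshold on `N` depends on `z`.
-/

open Filter Set MeasureTheory ProbabilityTheory Metric Bornology

noncomputable section

/-- A curve: a continuous function `γ : [0, t_γ] → ℂ` with finite time length `t_γ`. -/
structure Curve where
  len : ℝ
  len_nonneg : 0 ≤ len
  toFun : ℝ → ℂ
  cont : ContinuousOn toFun (Set.Icc 0 len)

namespace Curve

/-- The range of a curve, viewed as a subset of the plane. -/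
def range (γ : Curve) : Set ℂ := γ.toFun '' Set.Icc 0 γ.len

/-- `d_∞(γ, γ') = sup_{s ∈ [0,1]} |γ(s t_γ) − γ'(s t_{γ'})| + |t_γ − t_{γ'}|`. -/
def dInf (γ γ' : Curve) : ℝ :=
  (⨆ s : Set.Icc (0:ℝ) 1, dist (γ.toFun ((s : ℝ) * γ.len)) (γ'.toFun ((s : ℝ) * γ'.len)))
    + |γ.len - γ'.len|

/-- The left endpoint `s⁻` of the largest subinterval `(s⁻, s⁺)` of `[0, γ'.len]` with
`s⁻ ≤ s ≤ s⁺` on whose interior `γ'` stays in the ball `B(c; δ)`. -/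
def maxIntLo (γ' : Curve) (c : ℂ) (δ s : ℝ) : ℝ :=
  sSup ({0} ∪ {a | a ∈ Set.Icc 0 s ∧ γ'.toFun a ∉ Metric.ball c δ})

/-- The right endpoint `s⁺` of the largest subinterval `(s⁻, s⁺)` of `[0, γ'.len]` with
`s⁻ ≤ s ≤ s⁺` on whose interior `γ'` stays in the ball `B(c; δ)`. -/
def maxIntHi (γ' : Curve) (c : ℂ) (δ s : ℝ) : ℝ :=
  sInf ({γ'.len} ∪ {b | b ∈ Set.Icc s γ'.len ∧ γ'.toFun b ∉ Metric.ball c δ})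

/-- Definition of a touching `(s, t)` of a curve `γ`. -/
def HasTouching (γ : Curve) (s t : ℝ) : Prop :=
  0 ≤ s ∧ s < t ∧ t ≤ γ.len ∧ γ.toFun s = γ.toFun t ∧
  ∃ δ : ℝ, 0 < δ ∧ ∀ ε ∈ Set.Ioo (0:ℝ) δ, ∃ γ' : Curve, γ'.len = γ.len ∧ dInf γ γ' < ε ∧
    γ'.toFun '' Set.Icc (maxIntLo γ' (γ.toFun s) δ s) (maxIntHi γ' (γ.toFun s) δ s) ∩
      γ'.toFun '' Set.Icc (maxIntLo γ' (γ.toFun t) δ t) (maxIntHi γ' (γ.toFun t) δ t) = ∅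

/-- A curve has no touchings if no pair `(s, t)` is a touching of it. -/
def HasNoTouchings (γ : Curve) : Prop := ∀ s t : ℝ, ¬ γ.HasTouching s t

end Curve

/-- The exterior `Ext A` of a bounded set `A ⊆ ℂ`: the (unique, for bounded `A`) unbounded
connected component of `ℂ \ closure A`; here expressed as the set of points of
`ℂ \ closure A` whose connected component in `ℂ \ closure A` is unbounded. -/
def extSet (A : Set ℂ) : Set ℂ :=
  {z | ¬ Bornology.IsBounded (connectedComponentIn (closure A)ᶜ z)}

/-- The hull `Hull A = ℂ \ Ext A`. -/
def hullSet (A : Set ℂ) : Set ℂ := (extSet A)ᶜ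

/-- The outer boundary `∂_o A`: the topological boundary of `Ext A`. -/
def outerBoundary (A : Set ℂ) : Set ℂ := frontier (extSet A)

/-- `dHLt A A' δ` expresses that the Hausdorff distance
`d_H(A, A') = inf {δ > 0 : A ⊆ (A')^δ and A' ⊆ A^δ}` is `< δ`; here `A^ε` is the
`ε`-thickening `⋃_{x ∈ A} B(x; ε)` of `A`. -/
def dHLt (A A' : Set ℂ) (δ : ℝ) : Prop :=
  ∃ ε : ℝ, 0 < ε ∧ ε < δ ∧ A ⊆ Metric.thickening ε A' ∧ A' ⊆ Metric.thickening ε A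

/-- Times `s, t` are `δ`-connected in a curve `γ` (of time length 1) if there is an open ball
`B` of diameter `δ` such that `γ(s)` and `γ(t)` lie in the same connected component of
`γ ∩ B` (the curve identified with its range). -/
def DeltaConnectedIn (δ : ℝ) (γ : Curve) (s t : ℝ) : Prop :=
  ∃ x : ℂ, γ.toFun t ∈ connectedComponentIn (Curve.range γ ∩ Metric.ball x (δ / 2)) (γ.toFun s)

/-! ### Continuous logarithms -/

/-- `w ↦ w - z` has a continuous logarithm on `A`. In particular `z ∉ A`. -/
def HasLog (A : Set ℂ) (z : ℂ) : Prop :=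
  ∃ L : ℂ → ℂ, ContinuousOn L A ∧ ∀ w ∈ A, Complex.exp (L w) = w - z

/-- Two continuous logarithms of the same function differ by a constant on a preconnected set;
stated for the difference of the two. -/
theorem eq_of_exp_const {α : Type*} [TopologicalSpace α] {S : Set α} (hS : IsPreconnected S)
    {h : α → ℂ} (hc : ContinuousOn h S) {c : ℂ} (he : ∀ x ∈ S, Complex.exp (h x) = c)
    {x y : α} (hx : x ∈ S) (hy : y ∈ S) : h x = h y := by
  refine hS.induction₂ (fun x y => h x = h y) ?_ ?_ ?_ hx hy
  · intro x hx
    have h1 : ∀ᶠ y in nhdsWithin x S, dist (h y) (h x) < 1 :=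
      (Metric.tendsto_nhds.1 (hc x hx)) 1 one_pos
    filter_upwards [h1, self_mem_nhdsWithin] with y hy hyS
    obtain ⟨n, hn⟩ := Complex.exp_eq_exp_iff_exists_int.1 ((he y hyS).trans (he x hx).symm)
    have h2 : ‖(n : ℂ) * (2 * Real.pi * Complex.I)‖ < 1 := by
      rw [dist_eq_norm, hn, add_sub_cancel_left] at hy
      exact hy
    have h3 : |(n : ℝ)| * (2 * Real.pi) < 1 := by
      simpa [abs_of_pos Real.pi_pos] using h2
    have h4 : n = 0 := by
      by_contra h0
      have : (1 : ℝ) ≤ |(n : ℝ)| := by exact_mod_cast Int.one_le_abs h0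
      nlinarith [Real.pi_gt_three]
    simp [hn, h4]
  · intro x y z _ _ _ h1 h2
    exact h1.trans h2
  · intro x y _ _ h1
    exact h1.symm

/-- If `x` is closer to `y` than `z` is, then, seen from `z`, the directions of `x` and `y` make
an angle less than a right angle. -/
theorem mem_slitPlane_div {x y z : ℂ} (h : dist x y < dist y z) :
    (x - z) / (y - z) ∈ Complex.slitPlane := by
  have hyz : y - z ≠ 0 := by
    intro h0
    rw [sub_eq_zero.1 h0, dist_self] at h
    exact absurd h (not_lt.2 dist_nonneg)
  refine Complex.ball_one_subset_slitPlane ?_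
  have : (x - z) / (y - z) - 1 = (x - y) / (y - z) := by
    field_simp
    ring
  rw [mem_ball, dist_eq_norm, this, norm_div, div_lt_one (norm_pos_iff.2 hyz)]
  simpa [dist_eq_norm] using h

/-- The condition on `y` says that `(w - y) / (w - x)` lies in the disc `B(1; 1)` for `w ∈ A`, where
the principal logarithm is continuous. -/
theorem HasLog.of_close {A : Set ℂ} {x y : ℂ} (h : HasLog A x)
    (hxy : ∀ w ∈ A, dist y x < dist w x) : HasLog A y := by
  obtain ⟨L, hL, he⟩ := h
  have hs : ∀ w ∈ A, (y - w) / (x - w) ∈ Complex.slitPlane := fun w hw =>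
    mem_slitPlane_div (by rw [dist_comm x w]; exact hxy w hw)
  have h0 : ∀ w ∈ A, x - w ≠ 0 := fun w hw h0 => by
    have := hs w hw
    rw [h0, div_zero] at this
    exact Complex.zero_notMem_slitPlane this
  refine ⟨fun w => L w + Complex.log ((y - w) / (x - w)), ?_, fun w hw => ?_⟩
  · exact hL.add (ContinuousOn.clog
      (ContinuousOn.div (by fun_prop) (by fun_prop) h0) hs)
  · rw [Complex.exp_add, he w hw, Complex.exp_log (Complex.slitPlane_ne_zero (hs w hw)),
      ← neg_sub x w, ← neg_sub y w]
    field_simp [h0 w hw]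

theorem hasLog_of_far {A : Set ℂ} {x : ℂ} (h : ∀ w ∈ A, ‖w‖ < ‖x‖) : HasLog A x := by
  rcases A.eq_empty_or_nonempty with rfl | ⟨a, ha⟩
  · exact ⟨0, by simp, by simp⟩
  have hx : x ≠ 0 := norm_pos_iff.1 ((norm_nonneg a).trans_lt (h a ha))
  have hs : ∀ w ∈ A, (w - x) / (0 - x) ∈ Complex.slitPlane := fun w hw =>
    mem_slitPlane_div (by simpa using h w hw)
  refine ⟨fun w => Complex.log (-x) + Complex.log ((w - x) / (0 - x)), ?_, fun w hw => ?_⟩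
  · exact continuousOn_const.add (ContinuousOn.clog
      (ContinuousOn.div (by fun_prop) (by fun_prop) (fun _ _ => by simpa using hx)) hs)
  · rw [Complex.exp_add, Complex.exp_log (neg_ne_zero.2 hx),
      Complex.exp_log (Complex.slitPlane_ne_zero (hs w hw)), zero_sub]
    field_simp

/-- The easy half of Eilenberg's criterion: whether `w - x` has a logarithm on `A` depends only on
the component of `x` in the complement of `A`, and it does for `x` far away. -/
theorem hasLog_of_unbounded {A : Set ℂ} (hA : IsCompact A) {z : ℂ}
    (hz : ¬ IsBounded (connectedComponentIn Aᶜ z)) : HasLog A z := by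
  obtain ⟨R, hR⟩ := hA.isBounded.exists_norm_le
  obtain ⟨x, hx, hxR⟩ : ∃ x ∈ connectedComponentIn Aᶜ z, R < ‖x‖ := by
    by_contra! hcon
    exact hz (isBounded_iff_forall_norm_le.2 ⟨R, hcon⟩)
  have hne : (connectedComponentIn Aᶜ z).Nonempty := ⟨x, hx⟩
  have hzA : z ∈ Aᶜ := connectedComponentIn_nonempty_iff.1 hne
  have key := isPreconnected_connectedComponentIn.induction₂'
    (s := connectedComponentIn Aᶜ z) (fun x y => HasLog A x → HasLog A y) ?_ ?_ hx
    (mem_connectedComponentIn hzA)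
  · exact key (hasLog_of_far fun w hw => (hR w hw).trans_lt hxR)
  · intro x hx
    obtain ⟨ε, hε, hb⟩ := Metric.isOpen_iff.1 hA.isClosed.isOpen_compl x
      (connectedComponentIn_subset _ _ hx)
    refine mem_nhdsWithin_of_mem_nhds ?_
    filter_upwards [Metric.ball_mem_nhds x (half_pos hε)] with y hy
    have hA' : ∀ w ∈ A, ε ≤ dist w x := fun w hw => by
      by_contra! hlt
      exact hb hlt hw
    rw [mem_ball] at hy
    refine ⟨fun h => h.of_close fun w hw => ?_, fun h => h.of_close fun w hw => ?_⟩
    · linarith [hA' w hw]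
    · linarith [hA' w hw, dist_triangle w y x, dist_comm x y]
  · intro x y z _ _ _ h1 h2 h
    exact h2 (h1 h)

theorem exists_log_of_ne_zero {f : ℂ → ℂ} (hf : Continuous f) (h0 : ∀ w, f w ≠ 0) :
    ∃ L : ℂ → ℂ, Continuous L ∧ ∀ w, Complex.exp (L w) = f w := by
  have := Complex.isCoveringMap_exp.existsUnique_continuousMap_lifts
    (⟨fun w => ⟨f w, h0 w⟩, by fun_prop⟩ : C(ℂ, {z : ℂ // z ≠ 0}))
    (a₀ := 0) (e₀ := Complex.log (f 0)) (by simp [Complex.exp_log (h0 0)])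
  obtain ⟨F, ⟨_, hF⟩, _⟩ := this
  exact ⟨F, F.continuous, fun w => congrArg Subtype.val (congrFun hF w)⟩

/-! ### The exterior of a compact set -/

section Exterior

variable {A : Set ℂ}

theorem mem_extSet_iff (hA : IsCompact A) {z : ℂ} :
    z ∈ extSet A ↔ ¬ IsBounded (connectedComponentIn Aᶜ z) := by
  rw [extSet, hA.isClosed.closure_eq, mem_ofPred_eq]

theorem mem_extSet_congr (hA : IsCompact A) {x y : ℂ} (h : y ∈ connectedComponentIn Aᶜ x) :
    x ∈ extSet A ↔ y ∈ extSet A := by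
  rw [mem_extSet_iff hA, mem_extSet_iff hA, connectedComponentIn_eq h]

theorem notMem_of_mem_extSet (hA : IsCompact A) {z : ℂ} (hz : z ∈ extSet A) : z ∉ A := by
  intro hzA
  rw [mem_extSet_iff hA, connectedComponentIn_eq_empty (by simpa using hzA)] at hz
  exact hz isBounded_empty

theorem connectedComponentIn_compl_mem_nhds (hA : IsCompact A) {z : ℂ} (hz : z ∉ A) :
    connectedComponentIn Aᶜ z ∈ nhds z :=
  connectedComponentIn_mem_nhds (hA.isClosed.isOpen_compl.mem_nhds hz)

theorem isOpen_extSet (hA : IsCompact A) : IsOpen (extSet A) := by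
  refine isOpen_iff_mem_nhds.2 fun z hz => ?_
  filter_upwards [connectedComponentIn_compl_mem_nhds hA (notMem_of_mem_extSet hA hz)] with y hy
  exact (mem_extSet_congr hA hy).1 hz

theorem frontier_extSet_subset (hA : IsCompact A) : frontier (extSet A) ⊆ A := by
  intro w hw
  by_contra hwA
  obtain ⟨y, hyC, hyE⟩ := mem_closure_iff_nhds.1 hw.1 _
    (connectedComponentIn_compl_mem_nhds hA hwA)
  rw [(isOpen_extSet hA).frontier_eq] at hw
  exact hw.2 ((mem_extSet_congr hA hyC).2 hyE)

theorem mem_extSet_of_far (hA : IsCompact A) {w : ℂ} (h : ∀ a ∈ A, ‖a‖ < ‖w‖) (hw : w ≠ 0) :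
    w ∈ extSet A := by
  rw [mem_extSet_iff hA]
  intro hb
  -- The ray from `w` away from the origin is connected, unbounded, and misses `A`
  have hpre : IsPreconnected ((fun t : ℝ => t • w) '' Ici 1) :=
    isPreconnected_Ici.image _ (by fun_prop)
  have hsub : (fun t : ℝ => t • w) '' Ici 1 ⊆ Aᶜ := by
    rintro _ ⟨t, ht, rfl⟩ hmem
    have h1 := h _ hmem
    rw [norm_smul, Real.norm_eq_abs, abs_of_pos (one_pos.trans_le ht)] at h1
    nlinarith [norm_nonneg w, mem_Ici.1 ht]
  obtain ⟨R, hR⟩ := (hb.subset (hpre.subset_connectedComponentIn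
    ⟨1, self_mem_Ici, one_smul ℝ w⟩ hsub)).exists_norm_le
  have hw' : 0 < ‖w‖ := norm_pos_iff.2 hw
  have h1 := hR _ ⟨|R| / ‖w‖ + 1,
    by simp only [mem_Ici]; linarith [div_nonneg (abs_nonneg R) hw'.le], rfl⟩
  rw [norm_smul, Real.norm_eq_abs, abs_of_pos (by positivity), add_mul,
    div_mul_cancel₀ _ hw'.ne'] at h1
  linarith [le_abs_self R]

/-- The plane is simply connected, so a logarithm of `w - z` on the boundary of the exterior
forces `z` into the exterior: filling in the hull by the exponential of a Tietze extension of the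
logarithm would give a nowhere vanishing continuous function on the plane which equals `w - z`
near infinity, and such a function would have a logarithm of winding number one. -/
theorem not_hasLog_frontier (hA : IsCompact A) {z : ℂ} (hz : z ∉ extSet A) :
    ¬ HasLog (frontier (extSet A)) z := by
  classical
  rintro ⟨L, hL, he⟩
  obtain ⟨G, hG⟩ := ContinuousMap.exists_restrict_eq (isClosed_frontier (s := extSet A))
    ⟨(frontier (extSet A)).domRestrict L, hL.domRestrict⟩
  have hG' : ∀ w ∈ frontier (extSet A), G w = L w := fun w hw =>
    congrArg (fun φ : C(frontier (extSet A), ℂ) => φ ⟨w, hw⟩) hG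
  -- The two formulas match on the frontier, and neither vanishes on its own region.
  let f : ℂ → ℂ := fun w => if w ∈ extSet A then w - z else Complex.exp (G w)
  have hf : Continuous f := by
    refine Continuous.if (p := (· ∈ extSet A)) (fun w hw => ?_) (by fun_prop) (by fun_prop)
    have hw' : w ∈ frontier (extSet A) := hw
    rw [hG' w hw', he w hw']
  have hf0 : ∀ w, f w ≠ 0 := by
    intro w
    by_cases hw : w ∈ extSet A
    · simp only [f, hw, if_true]
      rintro h0
      exact hz (sub_eq_zero.1 h0 ▸ hw)
    · simp only [f, hw, if_false]
      exact Complex.exp_ne_zero _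
  obtain ⟨M, hM, hMf⟩ := exists_log_of_ne_zero hf hf0
  obtain ⟨R, hR⟩ := hA.isBounded.exists_norm_le
  -- With this radius the circle about `z` lies in the exterior, where `f w = w - z`.
  set ρ : ℝ := ‖z‖ + |R| + 1 with hρ
  have hρ0 : 0 < ρ := by positivity
  have hcirc : ∀ θ : ℝ, f (z + ρ * Complex.exp (θ * Complex.I))
      = ρ * Complex.exp (θ * Complex.I) := by
    intro θ
    have hn : |R| + 1 ≤ ‖z + ρ * Complex.exp (θ * Complex.I)‖ := by
      have h1 := norm_sub_le (z + ρ * Complex.exp (θ * Complex.I)) z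
      rw [add_sub_cancel_left, norm_mul, Complex.norm_exp_ofReal_mul_I, Complex.norm_real,
        Real.norm_eq_abs, abs_of_pos hρ0] at h1
      linarith
    have hmem : z + ρ * Complex.exp (θ * Complex.I) ∈ extSet A := by
      refine mem_extSet_of_far hA (fun a ha => ?_) (norm_pos_iff.1 ?_)
      · linarith [hR a ha, le_abs_self R]
      · linarith [abs_nonneg R]
    simp only [f, hmem, if_true, add_sub_cancel_left]
  -- `M` and `i θ` would differ by a constant along the circle, yet `M` is `2π`-periodic there.
  have hconst := eq_of_exp_const (isPreconnected_univ (α := ℝ)) (c := (ρ : ℂ))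
    (h := fun θ : ℝ => M (z + ρ * Complex.exp (θ * Complex.I)) - θ * Complex.I)
    (by fun_prop) (fun θ _ => by
      rw [Complex.exp_sub, hMf, hcirc, mul_div_cancel_right₀ _ (Complex.exp_ne_zero _)])
    (mem_univ 0) (mem_univ (2 * Real.pi))
  simp only [Complex.ofReal_zero, zero_mul, Complex.exp_zero, mul_one, sub_zero,
    Complex.ofReal_mul, Complex.ofReal_ofNat, Complex.exp_two_pi_mul_I] at hconst
  exact Complex.two_pi_I_ne_zero (by linear_combination hconst)

end Exterior

/-! ### Local connectedness of curves and uniform distance -/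

namespace Curve

theorem isCompact_range (γ : Curve) : IsCompact γ.range :=
  isCompact_Icc.image_of_continuousOn γ.cont

/-- The range of a curve is locally connected at each of its points (connected im kleinen): as a
continuous image of a compact interval it carries the quotient topology, and the preimage of the
component of `p` is open. -/
theorem exists_ball_subset_component (γ : Curve) {p : ℂ} (hp : p ∈ γ.range) {η : ℝ}
    (hη : 0 < η) : ∃ r > 0, γ.range ∩ ball p r ⊆ connectedComponentIn (γ.range ∩ ball p η) p := by
  set C := connectedComponentIn (γ.range ∩ ball p η) p with hC
  -- `γ` is extended to `ℝ` by constants, `ℝ` being known to be locally connected.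
  let g : ℝ → ℂ := IccExtend γ.len_nonneg ((Icc 0 γ.len).domRestrict γ.toFun)
  have hg : Continuous g := γ.cont.domRestrict.Icc_extend'
  have hgr : ∀ s, g s ∈ γ.range := fun s => ⟨_, (projIcc 0 γ.len γ.len_nonneg s).2, rfl⟩
  have hopen : IsOpen (g ⁻¹' C) := by
    refine isOpen_iff_mem_nhds.2 fun s hs => ?_
    have hsb : s ∈ g ⁻¹' ball p η := (connectedComponentIn_subset _ _ hs).2
    refine mem_of_superset (connectedComponentIn_mem_nhds
      ((isOpen_ball.preimage hg).mem_nhds hsb)) ?_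
    rw [← image_subset_iff, hC, connectedComponentIn_eq hs]
    refine (isPreconnected_connectedComponentIn.image g hg.continuousOn).subset_connectedComponentIn
      ⟨s, mem_connectedComponentIn hsb, rfl⟩ ?_
    rintro _ ⟨t, ht, rfl⟩
    exact ⟨hgr t, connectedComponentIn_subset (g ⁻¹' ball p η) s ht⟩
  have hcl : IsClosed (g '' (Icc 0 γ.len ∩ (g ⁻¹' C)ᶜ)) :=
    ((isCompact_Icc.inter_right hopen.isClosed_compl).image hg).isClosed
  have hpC : p ∈ C := mem_connectedComponentIn ⟨hp, mem_ball_self hη⟩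
  have hpn : p ∈ (g '' (Icc 0 γ.len ∩ (g ⁻¹' C)ᶜ))ᶜ := by
    rintro ⟨s, hs, hsp⟩
    exact hs.2 (show g s ∈ C by rwa [hsp])
  obtain ⟨r, hr, hball⟩ := Metric.isOpen_iff.1 hcl.isOpen_compl p hpn
  refine ⟨r, hr, ?_⟩
  rintro _ ⟨⟨s, hs, rfl⟩, hsr⟩
  have hgs : g s = γ.toFun s := IccExtend_of_mem _ _ hs
  by_contra hns
  exact hball hsr ⟨s, ⟨hs, by rwa [mem_compl_iff, mem_preimage, hgs]⟩, hgs⟩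

theorem dist_lt_of_dInf_lt {γ γ' : Curve} (h : γ.len = 1) (h' : γ'.len = 1) {η : ℝ}
    (hd : dInf γ γ' < η) {s : ℝ} (hs : s ∈ Icc (0 : ℝ) 1) :
    dist (γ.toFun s) (γ'.toFun s) < η := by
  have hc := γ.cont
  have hc' := γ'.cont
  rw [dInf] at hd
  rw [h] at hc hd
  rw [h'] at hc' hd
  simp only [mul_one, sub_self, abs_zero, add_zero] at hd
  have hcont : Continuous fun s : Icc (0 : ℝ) 1 => dist (γ.toFun s) (γ'.toFun s) :=
    hc.domRestrict.dist hc'.domRestrict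
  exact (le_ciSup (_root_.isCompact_range hcont).bddAbove (⟨s, hs⟩ : Icc (0 : ℝ) 1)).trans_lt hd

end Curve

/-! ### Transferring a logarithm from one curve to the other -/

/-- The sample points `p = γ (σ p)`, `p ∈ t`, have relative neighbourhoods `B(p; r p)` in `γ` that
cover `K` and stay in the component of `p` in `γ ∩ B(p; η)`. Given a logarithm `L` of `w - z` on the
range of `γ'`, put `q p = γ' (σ p)` and continue the value `L (q p)` from `q p` to a nearby `w ∈ K`
by the principal branch. Where two such neighbourhoods meet, the two samples are connected in `γ`
within a ball of diameter `4 η`, hence by `hconn` in `γ'` within one of diameter `16 η`; on that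
connected piece of `γ'` the logarithm `L` follows the principal branch, so both continuations
agree. All points involved stay within `20 η` of `w`, so none of this winds around `z`. -/
theorem hasLog_transfer (γ γ' : Curve) (hlen : γ.len = 1) (hlen' : γ'.len = 1)
    {η : ℝ} {K : Set ℂ} (hK : K ⊆ γ.range) {t : Finset ℂ} {r : ℂ → ℝ} {σ : ℂ → ℝ}
    (hσ : ∀ p ∈ t, σ p ∈ Icc (0 : ℝ) 1 ∧ γ.toFun (σ p) = p)
    (hcov : ∀ w ∈ K, ∃ p ∈ t, w ∈ ball p (r p))
    (hr : ∀ p ∈ t, γ.range ∩ ball p (r p) ⊆ connectedComponentIn (γ.range ∩ ball p η) p)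
    (hclose : ∀ s ∈ Icc (0 : ℝ) 1, dist (γ'.toFun s) (γ.toFun s) < η)
    (hconn : ∀ p ∈ t, ∀ p' ∈ t, DeltaConnectedIn (4 * η) γ (σ p) (σ p') →
      DeltaConnectedIn (4 * (4 * η)) γ' (σ p) (σ p'))
    {z : ℂ} (hz : ∀ w ∈ K, 20 * η ≤ dist w z) (hlog : HasLog γ'.range z) : HasLog K z := by
  obtain ⟨L, hL, he⟩ := hlog
  choose! i hit hi using hcov
  let q : ℂ → ℂ := fun p => γ'.toFun (σ p)
  have hqr : ∀ p ∈ t, q p ∈ γ'.range := fun p hp => ⟨σ p, by rw [hlen']; exact (hσ p hp).1, rfl⟩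
  have hqp : ∀ p ∈ t, dist (q p) p < η := fun p hp => by
    simpa [q, (hσ p hp).2] using hclose (σ p) (hσ p hp).1
  -- The principal branch of `log (x - z)` is normalised to vanish at `x = w`, so continuing from
  -- `q p` to `w` subtracts its value at `q p`.
  let F : ℂ → ℂ → ℂ := fun p w => L (q p) - Complex.log ((q p - z) / (w - z))
  have hcomp : ∀ p ∈ t, ∀ w ∈ K, w ∈ ball p (r p) →
      w ∈ connectedComponentIn (γ.range ∩ ball p η) p := fun p hp w hw hwp =>
    hr p hp ⟨hK hw, hwp⟩
  have hwp : ∀ p ∈ t, ∀ w ∈ K, w ∈ ball p (r p) → dist w p < η := fun p hp w hw hwp =>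
    (connectedComponentIn_subset _ _ (hcomp p hp w hw hwp)).2
  have hslit : ∀ p ∈ t, ∀ w ∈ K, w ∈ ball p (r p) →
      (q p - z) / (w - z) ∈ Complex.slitPlane := fun p hp w hw hwpr => by
    refine mem_slitPlane_div ?_
    linarith [dist_triangle (q p) p w, dist_comm p w, hqp p hp, hwp p hp w hw hwpr, hz w hw,
      dist_nonneg (x := w) (y := p)]
  have hagree : ∀ p ∈ t, ∀ p' ∈ t, ∀ w ∈ K, w ∈ ball p (r p) → w ∈ ball p' (r p') →
      F p w = F p' w := by
    intro p hp p' hp' w hw hwpr hwpr'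
    have hd := hwp p hp w hw hwpr
    have hd' := hwp p' hp' w hw hwpr'
    have hη : 0 < η := dist_nonneg.trans_lt hd
    have hpw : ∀ x ∈ t, w ∈ ball x (r x) → ∀ y ∈ γ.range ∩ ball x η,
        y ∈ γ.range ∩ ball w (4 * η / 2) := fun x hx hwx y hy => by
      refine ⟨hy.1, ?_⟩
      have h1 := hwp x hx w hw hwx
      have h2 := hy.2
      rw [mem_ball] at h2 ⊢
      linarith [dist_triangle y x w, dist_comm x w]
    have hDC : DeltaConnectedIn (4 * η) γ (σ p) (σ p') := by
      refine ⟨w, ?_⟩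
      rw [(hσ p hp).2, (hσ p' hp').2]
      have h1 := connectedComponentIn_mono p (hpw p hp hwpr) (hcomp p hp w hw hwpr)
      have h2 := connectedComponentIn_mono p' (hpw p' hp' hwpr') (hcomp p' hp' w hw hwpr')
      rw [connectedComponentIn_eq h1, ← connectedComponentIn_eq h2]
      refine mem_connectedComponentIn (hpw p' hp' hwpr' p' ⟨?_, mem_ball_self hη⟩)
      exact ⟨σ p', by rw [hlen]; exact (hσ p' hp').1, (hσ p' hp').2⟩
    obtain ⟨c, hc⟩ := hconn p hp p' hp' hDC
    set S := connectedComponentIn (γ'.range ∩ ball c (4 * (4 * η) / 2)) (q p)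
    have hqS' : q p' ∈ S := hc
    have hqS : q p ∈ S :=
      mem_connectedComponentIn (connectedComponentIn_nonempty_iff.1 ⟨_, hc⟩)
    have hSsub : S ⊆ γ'.range ∩ ball c (4 * (4 * η) / 2) := connectedComponentIn_subset _ _
    have hSslit : ∀ x ∈ S, (x - z) / (w - z) ∈ Complex.slitPlane := fun x hx => by
      refine mem_slitPlane_div ?_
      have h1 := (hSsub hx).2
      have h2 := (hSsub hqS).2
      rw [mem_ball] at h1 h2
      linarith [dist_triangle x c w, dist_triangle c (q p) w, dist_triangle (q p) p w,
        dist_comm p w, dist_comm c (q p), hqp p hp, hz w hw]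
    have hwz : w - z ≠ 0 := by
      rw [sub_ne_zero, ← dist_pos]
      linarith [hz w hw]
    -- On `S`, the difference of `L` and the principal branch normalised at `w` is constant.
    refine eq_of_exp_const (S := S) isPreconnected_connectedComponentIn (c := w - z)
      (h := fun x => L x - Complex.log ((x - z) / (w - z))) ?_ (fun x hx => ?_) hqS hqS'
    · exact (hL.mono fun x hx => (hSsub hx).1).sub
        (ContinuousOn.clog (by fun_prop) hSslit)
    · have hxz := Complex.slitPlane_ne_zero (hSslit x hx)
      rw [Complex.exp_sub, he x (hSsub hx).1, Complex.exp_log hxz,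
        div_div_cancel₀ fun h0 => hxz (by rw [h0, zero_div])]
  refine ⟨fun w => F (i w) w, ?_, fun w hw => ?_⟩
  · intro w hw
    have hcont : ContinuousWithinAt (F (i w)) K w := by
      have hs := hslit _ (hit w hw) w hw (hi w hw)
      refine continuousWithinAt_const.sub (ContinuousWithinAt.clog ?_ hs)
      refine ContinuousWithinAt.div (by fun_prop) (by fun_prop) fun h0 => ?_
      rw [h0, div_zero] at hs
      exact Complex.zero_notMem_slitPlane hs
    refine hcont.congr_of_eventuallyEq ?_ rfl
    filter_upwards [self_mem_nhdsWithin,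
      mem_nhdsWithin_of_mem_nhds (isOpen_ball.mem_nhds (hi w hw))] with y hy hyb
    exact hagree _ (hit y hy) _ (hit w hw) y hy (hi y hy) hyb
  · have hs := Complex.slitPlane_ne_zero (hslit _ (hit w hw) w hw (hi w hw))
    simp only [F]
    rw [Complex.exp_sub, he _ (hqr _ (hit w hw)), Complex.exp_log hs,
      div_div_cancel₀ fun h0 => hs (by rw [h0, zero_div])]

/-! ### Convergence of exteriors -/

theorem stmt8 (γN : ℕ → Curve) (γ : Curve) (hlen : γ.len = 1) (hlenN : ∀ N, (γN N).len = 1)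
    (hconv : Filter.Tendsto (fun N => Curve.dInf (γN N) γ) Filter.atTop (nhds 0))
    (hdelta : ∀ δ : ℝ, 0 < δ → ∀ s t : ℝ, s ∈ Set.Icc (0:ℝ) 1 → t ∈ Set.Icc (0:ℝ) 1 →
      DeltaConnectedIn δ γ s t → ∃ N₀ : ℕ, ∀ N > N₀, DeltaConnectedIn (4 * δ) (γN N) s t) :
    ∀ δ : ℝ, 0 < δ → ∃ N₀ : ℕ, ∀ N > N₀,
      extSet (Curve.range (γN N)) ⊆ Metric.thickening δ (extSet γ.range) := by
  intro δ hδ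
  -- `hasLog_transfer` needs the frontier of `extSet γ.range` to be at distance at least `20 * η`
  -- from `z`.
  obtain ⟨η, hη, hηδ⟩ : ∃ η : ℝ, 0 < η ∧ 20 * η = δ := ⟨δ / 20, by positivity, by ring⟩
  have hKr : frontier (extSet γ.range) ⊆ γ.range := frontier_extSet_subset γ.isCompact_range
  have hKc : IsCompact (frontier (extSet γ.range)) :=
    γ.isCompact_range.of_isClosed_subset isClosed_frontier hKr
  have hloc := fun p (hp : p ∈ frontier (extSet γ.range)) =>
    γ.exists_ball_subset_component (hKr hp) hη
  choose! r hr0 hr using hloc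
  have htime : ∀ p ∈ γ.range, ∃ s, s ∈ Icc (0 : ℝ) 1 ∧ γ.toFun s = p := by
    rintro _ ⟨s, hs, rfl⟩
    exact ⟨s, hlen ▸ hs, rfl⟩
  choose! σ hσ using htime
  obtain ⟨t, htK, htcov⟩ := hKc.elim_nhds_subcover (fun p => ball p (r p))
    fun p hp => ball_mem_nhds p (hr0 p hp)
  have hconn : ∀ᶠ N in atTop, ∀ p ∈ t, ∀ p' ∈ t, DeltaConnectedIn (4 * η) γ (σ p) (σ p') →
      DeltaConnectedIn (4 * (4 * η)) (γN N) (σ p) (σ p') := by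
    refine (eventually_all_finset t).2 fun p hp => (eventually_all_finset t).2 fun p' hp' => ?_
    by_cases h : DeltaConnectedIn (4 * η) γ (σ p) (σ p')
    · obtain ⟨N₀, hN₀⟩ := hdelta (4 * η) (by positivity) _ _ (hσ p (hKr (htK p hp))).1
        (hσ p' (hKr (htK p' hp'))).1 h
      filter_upwards [eventually_gt_atTop N₀] with N hN _ using hN₀ N hN
    · exact Eventually.of_forall fun N h' => absurd h' h
  obtain ⟨N₀, hN₀⟩ := eventually_atTop.1 (hconn.and (hconv.eventually (gt_mem_nhds hη)))
  refine ⟨N₀, fun N hN z hz => ?_⟩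
  obtain ⟨hNconn, hNd⟩ := hN₀ N hN.le
  by_contra hzth
  have hfar : ∀ x ∈ extSet γ.range, δ ≤ dist x z := fun x hx => by
    by_contra! hlt
    exact hzth (mem_thickening_iff.2 ⟨x, hx, by rwa [dist_comm]⟩)
  have hfar' : ∀ w ∈ frontier (extSet γ.range), 20 * η ≤ dist w z := fun w hw => by
    rw [hηδ]
    exact closure_minimal (t := {x | δ ≤ dist x z}) hfar
      (isClosed_le continuous_const (by fun_prop)) hw.1
  have hzγ : z ∉ extSet γ.range := fun h => hzth (self_subset_thickening hδ _ h)
  refine not_hasLog_frontier γ.isCompact_range hzγ ?_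
  refine hasLog_transfer γ (γN N) hlen (hlenN N) hKr (fun p hp => hσ p (hKr (htK p hp)))
    (fun w hw => by simpa using htcov hw) (fun p hp => hr p (htK p hp))
    (fun s hs => Curve.dist_lt_of_dInf_lt (hlenN N) hlen hNd hs) hNconn hfar' ?_
  exact hasLog_of_unbounded (γN N).isCompact_range
    ((mem_extSet_iff (γN N).isCompact_range).1 hz)
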